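/- Let A be a pushdown timed automaton. For any states s₀ and s₁, any initialized pair (v₀,v₁) of clock valuations, and any stack words w₀ and w₁: (s₀,v₀,w₀) →*_A (s₁,v₁,w₁) iff there exists a pattern η such that (v₀,v₁) has pattern η and (s₀,int(v₀),w₀) →*_{A,η} (s₁,int(v₁),w₁). -/

import Mathlib

open scoped BigOperators

namespace PTApaper

/-! ## Clock valuations -/

/-- A (raw) clock valuation on clocks `x_0, …, x_k`. -/
abbrev Val (k : ℕ) := Fin (k+1) → ℝ

/-- A discrete clock valuation. -/
abbrev DVal (k : ℕ) := Fin (k+1) → ℕ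

/-- A clock valuation takes nonnegative values. -/
def IsVal {k : ℕ} (v : Val k) : Prop := ∀ i, 0 ≤ v i

/-- A valuation is initial if the auxiliary clock `x_0` has value 0. -/
def Initial {k : ℕ} (v : Val k) : Prop := v 0 = 0

/-- The integral part `int(v)` of a valuation. -/
noncomputable def intPart {k : ℕ} (v : Val k) : DVal k := fun i => (⌊v i⌋).toNat

/-- The fractional parts of the relative representation `rel(v)`:
`fract(rel(v))(0) = fract (1 - fract (v 0))` and
`fract(rel(v))(i) = fract (fract (v i) + fract(rel(v))(0))` for `i ∈ K⁺`. -/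
noncomputable def relFract {k : ℕ} (v : Val k) : Fin (k+1) → ℝ := fun i =>
  if i = 0 then Int.fract (1 - Int.fract (v 0))
  else Int.fract (Int.fract (v i) + Int.fract (1 - Int.fract (v 0)))

/-- Synchronous clock progress `v + δ`. -/
def shift {k : ℕ} (v : Val k) (δ : ℝ) : Val k := fun i => v i + δ

/-- Clock reset `v↓_r`. -/
def resetVal {k : ℕ} (r : Finset (Fin (k+1))) (v : Val k) : Val k :=
  fun i => if i ∈ r then 0 else v i

/-! ## Patterns -/

/-- A raw pattern: a finite sequence of subsets of `K⁰ ∪ K¹`, where the index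
`(i, false)` stands for `i⁰` and `(i, true)` stands for `i¹`. -/
abbrev PatSeq (k : ℕ) := List (Finset (Fin (k+1) × Bool))

/-- The well-formedness conditions making `η = p₀,…,p_n` a pattern:
`0 ≤ n < 2(k+1)`, the `p_m` are nonempty and pairwise disjoint, `0⁰ ∈ p₀`,
and `p₀ ∪ … ∪ p_n = K⁰ ∪ K¹`. -/
def IsPattern {k : ℕ} (η : PatSeq k) : Prop :=
  η.length ≤ 2*(k+1) ∧
  (∀ p ∈ η, p.Nonempty) ∧
  η.Pairwise Disjoint ∧
  ((0 : Fin (k+1)), false) ∈ η.getD 0 ∅ ∧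
  (∀ x : Fin (k+1) × Bool, ∃ p ∈ η, x ∈ p)

/-- `bval v₀ v₁ b` is `v_b`. -/
def bval {k : ℕ} (v₀ v₁ : Val k) : Bool → Val k
  | false => v₀
  | true => v₁

/-- The defining ordering condition for "`(v₀,v₁)` has pattern `η = p₀,…,p_n`":
for all positions `m, m'`, copies `b, b'` and clocks `i, i'` with `i^b ∈ p_m` and
`i'^{b'} ∈ p_{m'}`, `fract(rel(v_b))(i) = fract(rel(v_{b'}))(i')` iff `m = m'`, and
`fract(rel(v_b))(i) < fract(rel(v_{b'}))(i')` iff `m < m'`. -/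
def HasPatternOrd {k : ℕ} (v₀ v₁ : Val k) (η : PatSeq k) : Prop :=
  ∀ m m' : Fin η.length, ∀ b b' : Bool, ∀ i i' : Fin (k+1),
    (i, b) ∈ η.get m → (i', b') ∈ η.get m' →
      ((relFract (bval v₀ v₁ b) i = relFract (bval v₀ v₁ b') i' ↔ m = m') ∧
       (relFract (bval v₀ v₁ b) i < relFract (bval v₀ v₁ b') i' ↔ (m : ℕ) < (m' : ℕ)))

/-- `(v₀,v₁)` has pattern `η` (written `[(v₀,v₁)] = η`). -/
def PatternOf {k : ℕ} (v₀ v₁ : Val k) (η : PatSeq k) : Prop :=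
  IsPattern η ∧ HasPatternOrd v₀ v₁ η

/-- A pattern is initial if it is the pattern of `(v₀,v₀)` for some initial valuation `v₀`. -/
def InitialPattern {k : ℕ} (η : PatSeq k) : Prop :=
  ∃ v₀ : Val k, IsVal v₀ ∧ Initial v₀ ∧ PatternOf v₀ v₀ η

/-- The equivalence `(v₀¹,v₁) ≈ (v₀²,v₂)`: same pattern and same integral parts. -/
def PairEquiv {k : ℕ} (va vb vc vd : Val k) : Prop :=
  (∃ η : PatSeq k, PatternOf va vb η ∧ PatternOf vc vd η) ∧
  intPart va = intPart vc ∧ intPart vb = intPart vd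

/-! ## now-position, Next, next, reset -/

/-- The index of the now-position, i.e. the position containing `0¹`. -/
def nowIdx {k : ℕ} (η : PatSeq k) : ℕ :=
  η.findIdx fun p => decide (((0 : Fin (k+1)), true) ∈ p)

/-- A merge-pattern: the now-position is the singleton `{0¹}`. -/
def IsMergePat {k : ℕ} (η : PatSeq k) : Prop :=
  η.getD (nowIdx η) ∅ = ({((0 : Fin (k+1)), true)} : Finset (Fin (k+1) × Bool))

/-- A split-pattern: a pattern that is not a merge-pattern. -/
def IsSplitPat {k : ℕ} (η : PatSeq k) : Prop := ¬ IsMergePat η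

/-- The next pattern `Next(η)`. -/
def NextPat {k : ℕ} (η : PatSeq k) : PatSeq k :=
  let i := nowIdx η
  if η.getD i ∅ = ({((0 : Fin (k+1)), true)} : Finset (Fin (k+1) × Bool)) then
    -- merge case : `p₀, …, p_{i-1} ∪ {0¹}, p_{i+1}, …, p_n`
    η.take (i-1) ++ [η.getD (i-1) ∅ ∪ {((0 : Fin (k+1)), true)}] ++ η.drop (i+1)
  else if i = 0 then
    -- split case with `i = 0` : `p₀ ∖ {0¹}, p₁, …, p_n, {0¹}`
    (η.getD 0 ∅ \ {((0 : Fin (k+1)), true)}) :: (η.drop 1 ++ [{((0 : Fin (k+1)), true)}])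
  else
    -- split case with `i > 0` : `p₀, …, p_{i-1}, {0¹}, p_i ∖ {0¹}, p_{i+1}, …, p_n`
    η.take i ++ [{((0 : Fin (k+1)), true)}, η.getD i ∅ \ {((0 : Fin (k+1)), true)}]
      ++ η.drop (i+1)

/-- The counter update of `next(η,u)`. -/
def nextD {k : ℕ} (η : PatSeq k) (u : DVal k) : DVal k :=
  let i := nowIdx η
  if η.getD i ∅ = ({((0 : Fin (k+1)), true)} : Finset (Fin (k+1) × Bool)) then
    fun j =>
      if j = 0 then (if i = 1 then u 0 + 1 else u 0)
      else (if (j, true) ∈ η.getD (i-1) ∅ then u j + 1 else u j)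
  else u

/-- `next(η,u)`. -/
def nextPair {k : ℕ} (η : PatSeq k) (u : DVal k) : PatSeq k × DVal k :=
  (NextPat η, nextD η u)

/-- The pattern part of `reset_r(η,u)`: all indices `j¹`, `j ∈ r`, are moved into the
now-position, and entries that become empty are deleted. -/
def ResetPat {k : ℕ} (r : Finset (Fin (k+1))) (η : PatSeq k) : PatSeq k :=
  let r1 : Finset (Fin (k+1) × Bool) := r.image (fun j => (j, true))
  let i := nowIdx η
  (η.mapIdx (fun m p => if m = i then p ∪ r1 else p \ r1)).filter (fun p => decide (p ≠ ∅))

/-- The counter update of `reset_r(η,u)`. -/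
def resetD {k : ℕ} (r : Finset (Fin (k+1))) (u : DVal k) : DVal k :=
  fun j => if j ∈ r then 0 else u j

/-- `reset_r(η,u)`. -/
def resetPair {k : ℕ} (r : Finset (Fin (k+1))) (η : PatSeq k) (u : DVal k) :
    PatSeq k × DVal k :=
  (ResetPat r η, resetD r u)

/-! ## Pattern changes -/

/-- `v` has no pattern change for `δ`. -/
def NoChange {k : ℕ} (v₀ v : Val k) (δ : ℝ) : Prop :=
  ∃ η : PatSeq k, PatternOf v₀ v η ∧
    ∀ δ', 0 ≤ δ' → δ' ≤ δ → PatternOf v₀ (shift v δ') η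

/-- `v` has one pattern change for `δ`. -/
def OneChange {k : ℕ} (v₀ v : Val k) (δ : ℝ) : Prop :=
  ∃ η η' : PatSeq k, PatternOf v₀ v η ∧ PatternOf v₀ (shift v δ) η' ∧
    NextPat η = η' ∧
    ((∀ δ', 0 < δ' → δ' < δ → PatternOf v₀ (shift v δ') η) ∨
     (∀ δ', 0 < δ' → δ' < δ → PatternOf v₀ (shift v δ') η'))

/-- `v` has `n` pattern changes for `δ` (for `n ≥ 1`): `δ = δ₁ + … + δ_n` with each
`δ_j > 0` and `v + δ₁ + … + δ_j` has one pattern change for `δ_{j+1}`. -/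
def NChanges {k : ℕ} (v₀ v : Val k) (n : ℕ) (δ : ℝ) : Prop :=
  ∃ d : ℕ → ℝ, (∀ j < n, 0 < d j) ∧ (∑ j ∈ Finset.range n, d j) = δ ∧
    ∀ j < n, OneChange v₀ (shift v (∑ j' ∈ Finset.range j, d j')) (d j)

/-! ## Clock constraints -/

/-- Comparison operators `<, ≤, =, ≥, >`. -/
inductive CCmp | lt | le | eq | ge | gt

/-- Evaluation of a comparison operator on reals. -/
def CCmp.evalR : CCmp → ℝ → ℝ → Prop
  | .lt, a, b => a < b
  | .le, a, b => a ≤ b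
  | .eq, a, b => a = b
  | .ge, a, b => a ≥ b
  | .gt, a, b => a > b

/-- Clock constraints over the clocks `x_1, …, x_k` (indexed by `Fin k`, clock
`x_{i+1}` for `i : Fin k`): Boolean combinations of `x_i - x_j # d` and `x_i # d`. -/
inductive CC (k : ℕ)
  | diff (i j : Fin k) (op : CCmp) (d : ℕ) : CC k
  | single (i : Fin k) (op : CCmp) (d : ℕ) : CC k
  | not (c : CC k) : CC k
  | and (c₁ c₂ : CC k) : CC k

/-- `v ∈ c` : the valuation `v` satisfies the clock constraint `c`. -/
def CC.sat {k : ℕ} (v : Val k) : CC k → Prop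
  | .diff i j op d => op.evalR (v i.succ - v j.succ) (d : ℝ)
  | .single i op d => op.evalR (v i.succ) (d : ℝ)
  | .not c => ¬ c.sat v
  | .and c₁ c₂ => c₁.sat v ∧ c₂.sat v

/-- The position (in `η`) of an index `x ∈ K⁰ ∪ K¹`. -/
def posOf {k : ℕ} (η : PatSeq k) (x : Fin (k+1) × Bool) : ℕ :=
  η.findIdx fun p => decide (x ∈ p)

/-- The truth value, given by pattern `η`, of the fractional ordering
`fract(x_a) > fract(x_b)`. -/
def fracGtP {k : ℕ} (η : PatSeq k) (a b : Fin (k+1)) : Prop :=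
  let i := posOf η ((0 : Fin (k+1)), true)
  let m₁ := posOf η (a, true)
  let m₂ := posOf η (b, true)
  (m₁ < i ∧ i ≤ m₂) ∨ (m₂ < m₁ ∧ m₁ < i) ∨ (i ≤ m₂ ∧ m₂ < m₁)

/-- The truth value, given by pattern `η`, of `fract(x_a) = fract(x_b)`. -/
def fracEqP {k : ℕ} (η : PatSeq k) (a b : Fin (k+1)) : Prop :=
  posOf η (a, true) = posOf η (b, true)

/-- The truth value, given by pattern `η`, of `fract(x_a) = 0`. -/
def fracZeroP {k : ℕ} (η : PatSeq k) (a : Fin (k+1)) : Prop :=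
  posOf η (a, true) = posOf η ((0 : Fin (k+1)), true)

/-- `u ∈ c^η` : the discrete valuation `u` satisfies the constraint `c^η`, obtained by
rewriting `c` as `I(c)` over integral parts and fractional orderings and substituting the
truth values of the fractional orderings determined by the pattern `η`. -/
def CC.satP {k : ℕ} (η : PatSeq k) (u : DVal k) : CC k → Prop
  | .diff i j op d =>
      let I : ℤ := (u i.succ : ℤ) - (u j.succ : ℤ)
      (match op with
      | .lt => I < d ∨ (I = d ∧ fracGtP η j.succ i.succ)
      | .le => I < d ∨ (I = d ∧ (fracGtP η j.succ i.succ ∨ fracEqP η i.succ j.succ))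
      | .eq => I = d ∧ fracEqP η i.succ j.succ
      | .ge => I > d ∨ (I = d ∧ (fracGtP η i.succ j.succ ∨ fracEqP η i.succ j.succ))
      | .gt => I > d ∨ (I = d ∧ fracGtP η i.succ j.succ))
  | .single i op d =>
      let I : ℤ := (u i.succ : ℤ)
      (match op with
      | .lt => I < d
      | .le => I < d ∨ (I = d ∧ fracZeroP η i.succ)
      | .eq => I = d ∧ fracZeroP η i.succ
      | .ge => I ≥ d
      | .gt => I > d ∨ (I = d ∧ ¬ fracZeroP η i.succ))
  | .not c => ¬ c.satP η u
  | .and c₁ c₂ => c₁.satP η u ∧ c₂.satP η u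

/-! ## Pushdown timed automata -/

/-- A pushdown timed automaton `⟨S, {x₁,…,x_k}, Inv, R, Γ, PD⟩`:
`Inv` assigns an invariant to each state, `R s s' = (Rc s s', Rr s s')` assigns a reset
condition and a set of clock resets (a subset of `K⁺`) to each edge, and
`PD s s' = (PDa s s', PDw s s')` assigns a stack operation to each edge. -/
structure PTA (k : ℕ) (S : Type) (Γ : Type) where
  Inv : S → CC k
  Rc : S → S → CC k
  Rr : S → S → Finset (Fin (k+1))
  hRr : ∀ s s', (0 : Fin (k+1)) ∉ Rr s s'
  PDa : S → S → Γ
  PDw : S → S → List Γ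

/-- A configuration `(s, v, w)` of a PTA. -/
abbrev Config (k : ℕ) (S Γ : Type) := S × Val k × List Γ

/-- The one-step transition relation `→_A` of a PTA. -/
def Step {k : ℕ} {S Γ : Type} (A : PTA k S Γ) (c₁ c₂ : Config k S Γ) : Prop :=
  -- progress transition
  (c₁.1 = c₂.1 ∧ c₁.2.2 = c₂.2.2 ∧
    ∃ δ : ℝ, 0 < δ ∧ c₂.2.1 = shift c₁.2.1 δ ∧
      ∀ δ', 0 ≤ δ' → δ' ≤ δ → (A.Inv c₁.1).sat (shift c₁.2.1 δ')) ∨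
  -- reset transition
  ((A.Inv c₁.1).sat c₁.2.1 ∧ (A.Rc c₁.1 c₂.1).sat c₁.2.1 ∧
    c₂.2.1 = resetVal (A.Rr c₁.1 c₂.1) c₁.2.1 ∧ (A.Inv c₂.1).sat c₂.2.1 ∧
    ∃ w : List Γ, c₁.2.2 = A.PDa c₁.1 c₂.1 :: w ∧ c₂.2.2 = A.PDw c₁.1 c₂.1 ++ w)

/-- `→*_A`, the transitive closure of `→_A`. -/
def Reach {k : ℕ} {S Γ : Type} (A : PTA k S Γ) : Config k S Γ → Config k S Γ → Prop :=
  Relation.TransGen (Step A)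

/-- `(s₀,u₀,w₀) →*_{A,η} (s₁,u₁,w₁)`. -/
def ReachPat {k : ℕ} {S Γ : Type} (A : PTA k S Γ) (η : PatSeq k)
    (s₀ : S) (u₀ : DVal k) (w₀ : List Γ) (s₁ : S) (u₁ : DVal k) (w₁ : List Γ) : Prop :=
  ∃ v₀ v₁ : Val k, IsVal v₀ ∧ IsVal v₁ ∧ v₀ 0 = 0 ∧
    intPart v₀ = u₀ ∧ intPart v₁ = u₁ ∧ PatternOf v₀ v₁ η ∧
    Reach A (s₀, v₀, w₀) (s₁, v₁, w₁)

/-! ## The pattern graph -/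

/-- A configuration `(s, η, u, w)` of the pattern graph. -/
abbrev GConfig (k : ℕ) (S Γ : Type) := S × PatSeq k × DVal k × List Γ

/-- The one-step transition relation `→_G` of the pattern graph `G` of a PTA `A`,
through progress edges, stay edges and reset edges. -/
def GStep {k : ℕ} {S Γ : Type} (A : PTA k S Γ) (c₁ c₂ : GConfig k S Γ) : Prop :=
  -- progress edge
  (c₁.1 = c₂.1 ∧ c₁.2.2.2 = c₂.2.2.2 ∧
    nextPair c₁.2.1 c₁.2.2.1 = (c₂.2.1, c₂.2.2.1) ∧
    (A.Inv c₁.1).satP c₁.2.1 c₁.2.2.1 ∧ (A.Inv c₁.1).satP c₂.2.1 c₂.2.2.1) ∨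
  -- stay edge
  (c₁ = c₂ ∧ IsMergePat c₁.2.1 ∧ (A.Inv c₁.1).satP c₁.2.1 c₁.2.2.1) ∨
  -- reset edge
  (resetPair (A.Rr c₁.1 c₂.1) c₁.2.1 c₁.2.2.1 = (c₂.2.1, c₂.2.2.1) ∧
    ((A.Rc c₁.1 c₂.1).and (A.Inv c₁.1)).satP c₁.2.1 c₁.2.2.1 ∧
    (A.Inv c₂.1).satP c₂.2.1 c₂.2.2.1 ∧
    ∃ w : List Γ, c₁.2.2.2 = A.PDa c₁.1 c₂.1 :: w ∧ c₂.2.2.2 = A.PDw c₁.1 c₂.1 ++ w)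

/-- `→*_G`, the transitive closure of `→_G`. -/
def GReach {k : ℕ} {S Γ : Type} (A : PTA k S Γ) : GConfig k S Γ → GConfig k S Γ → Prop :=
  Relation.TransGen (GStep A)

end PTApaper

namespace PTApaper

/-- Strictly monotone interpolation of a strictly monotone map on a finite set. -/
theorem interp_aux (g : ℝ → ℝ) (T : Finset ℝ) : StrictMonoOn g (T : Set ℝ) →
    ∃ φ : ℝ → ℝ, StrictMono φ ∧ Function.Surjective φ ∧ ∀ x ∈ T, φ x = g x := by
  induction T using Finset.induction_on_max with
  | empty => exact fun _ => ⟨id, strictMono_id, Function.surjective_id, by simp⟩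
  | insert m s hs ih =>
    intro hg
    obtain ⟨φ, hφ, hsur, heq⟩ := ih (hg.mono (by simp))
    obtain ⟨b, hb1, hb2, hb3⟩ : ∃ b, (∀ x ∈ s, φ x ≤ b) ∧ b < φ m ∧ b < g m := by
      rcases s.eq_empty_or_nonempty with h | h
      · refine ⟨min (φ m) (g m) - 1, by simp [h], ?_, ?_⟩
        · linarith [min_le_left (φ m) (g m)]
        · linarith [min_le_right (φ m) (g m)]
      · refine ⟨φ (s.max' h), fun x hx => hφ.monotone (s.le_max' x hx), hφ (hs _ (s.max'_mem h)), ?_⟩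
        rw [heq _ (s.max'_mem h)]
        exact hg (by simp [s.max'_mem h]) (by simp) (hs _ (s.max'_mem h))
    set c := (g m - b) / (φ m - b) with hc
    have hcpos : 0 < c := div_pos (by linarith) (by linarith)
    have hcm : c * (φ m - b) = g m - b := div_mul_cancel₀ _ (by linarith)
    refine ⟨fun x => if φ x ≤ b then φ x else b + c * (φ x - b), ?_, ?_, ?_⟩
    · intro x y hxy
      have h := hφ hxy
      show (if φ x ≤ b then φ x else b + c * (φ x - b)) <
        (if φ y ≤ b then φ y else b + c * (φ y - b))
      split_ifs with h1 h2 h2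
      · exact h
      · have := mul_pos hcpos (sub_pos.2 (not_le.1 h2)); linarith
      · linarith
      · have := mul_lt_mul_of_pos_left h hcpos; linarith
    · intro y
      by_cases h : y ≤ b
      · obtain ⟨x, hx⟩ := hsur y
        exact ⟨x, by simp [hx, h]⟩
      · obtain ⟨x, hx⟩ := hsur (b + (y - b) / c)
        have : 0 < (y - b) / c := div_pos (by linarith [not_le.1 h]) hcpos
        refine ⟨x, ?_⟩
        have h2 : ¬ φ x ≤ b := by rw [hx]; linarith
        rw [show (fun x => if φ x ≤ b then φ x else b + c * (φ x - b)) x = b + c * (φ x - b) from if_neg h2, hx]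
        field_simp
        ring
    · intro x hx
      rcases Finset.mem_insert.1 hx with rfl | hx
      · simp only [if_neg (not_le.2 hb2), hcm]; ring
      · exact (if_pos (hb1 x hx)).trans (heq x hx)

/-- Periodic monotone interpolation. -/
theorem interp {ι : Type} [Fintype ι] (f f' : ι → ℝ)
    (h0 : ∀ i, 0 ≤ f i) (h1 : ∀ i, f i < 1) (h0' : ∀ i, 0 ≤ f' i) (h1' : ∀ i, f' i < 1)
    (hlt : ∀ i j, f' i < f' j ↔ f i < f j) (o : ι) (ho : f o = 0) (ho' : f' o = 0) :
    ∃ Φ : ℝ → ℝ, StrictMono Φ ∧ Function.Surjective Φ ∧ (∀ x (n : ℤ), Φ (x + n) = Φ x + n) ∧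
      ∀ i, Φ (f' i) = f i := by
  classical
  let F : Option ι → ℝ := fun x => x.elim 1 f
  let F' : Option ι → ℝ := fun x => x.elim 1 f'
  have hL : ∀ x y, F' x < F' y ↔ F x < F y := by
    rintro (_ | x) (_ | y)
    · simp [F, F']
    · simp only [F, F', Option.elim]
      exact iff_of_false (by linarith [h1' y]) (by linarith [h1 y])
    · simp only [F, F', Option.elim]
      exact iff_of_true (h1' x) (h1 x)
    · exact hlt x y
  have hfac : Function.FactorsThrough F F' := by
    intro x y hxy
    apply le_antisymm <;> apply le_of_not_gt <;> rw [← hL] <;> simp [hxy]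
  let g : ℝ → ℝ := Function.extend F' F 0
  have hg : ∀ x, g (F' x) = F x := fun x => hfac.extend_apply 0 x
  obtain ⟨φ, hφ, hsur, heq⟩ := interp_aux g (Finset.univ.image F') (by
    intro x hx y hy hxy
    simp only [Finset.coe_image, Finset.coe_univ, Set.image_univ, Set.mem_range] at hx hy
    obtain ⟨a, rfl⟩ := hx
    obtain ⟨b, rfl⟩ := hy
    rw [hg, hg]
    exact (hL _ _).1 hxy)
  have hφ' : ∀ x, φ (F' x) = F x := fun x => by rw [heq _ (by simp), hg]
  have e0 : φ 0 = 0 := by have := hφ' (some o); simpa [F, F', ho, ho'] using this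
  have e1 : φ 1 = 1 := by have := hφ' none; simpa [F, F'] using this
  have b0 : ∀ x, 0 ≤ φ (Int.fract x) := fun x => by
    rw [← e0]; exact hφ.monotone (Int.fract_nonneg x)
  have b1 : ∀ x, φ (Int.fract x) < 1 := fun x => by
    conv_rhs => rw [← e1]
    exact hφ (Int.fract_lt_one x)
  refine ⟨fun x => ⌊x⌋ + φ (Int.fract x), ?_, ?_, ?_, ?_⟩
  · intro x y hxy
    show (⌊x⌋ : ℝ) + φ (Int.fract x) < ⌊y⌋ + φ (Int.fract y)
    rcases (Int.floor_le_floor hxy.le).lt_or_eq with h | h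
    · have : (⌊x⌋ : ℝ) + 1 ≤ ⌊y⌋ := by exact_mod_cast h
      linarith [b0 y, b1 x]
    · rw [h]
      have : Int.fract x < Int.fract y := by
        unfold Int.fract; rw [h]; linarith
      linarith [hφ this]
  · intro y
    obtain ⟨x, hx⟩ := hsur (Int.fract y)
    have x0 : 0 ≤ x := by rw [← hφ.le_iff_le, e0, hx]; exact Int.fract_nonneg y
    have x1 : x < 1 := by rw [← hφ.lt_iff_lt, e1, hx]; exact Int.fract_lt_one y
    refine ⟨x + ⌊y⌋, ?_⟩
    have hf : ⌊x⌋ = 0 := Int.floor_eq_zero_iff.2 ⟨x0, x1⟩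
    simp only [Int.floor_add_intCast, Int.fract_add_intCast, hf, Int.fract_eq_self.2 ⟨x0, x1⟩, hx]
    push_cast
    rw [zero_add, Int.floor_add_fract]
  · intro x n
    simp only [Int.floor_add_intCast, Int.fract_add_intCast]
    push_cast; ring
  · intro i
    have hf : ⌊f' i⌋ = 0 := Int.floor_eq_zero_iff.2 ⟨h0' i, h1' i⟩
    simp only [hf, Int.fract_eq_self.2 ⟨h0' i, h1' i⟩]
    have := hφ' (some i)
    simpa [F, F'] using this

/-- Time-deformation of a valuation. -/
def deform {k : ℕ} (Φ : ℝ → ℝ) (v : Val k) : Val k := fun i => Φ (v i - v 0) - Φ (- v 0)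

theorem deform_diff {k : ℕ} {Φ : ℝ → ℝ} (hm : StrictMono Φ)
    (hp : ∀ x (n : ℤ), Φ (x + n) = Φ x + n) (op : CCmp) (a b : ℝ) (d : ℤ) :
    op.evalR (Φ a - Φ b) d ↔ op.evalR (a - b) d := by
  have e : Φ (b + d) = Φ b + d := hp b d
  have l1 : Φ a < Φ b + d ↔ a < b + d := by rw [← e, hm.lt_iff_lt]
  have l2 : Φ b + d < Φ a ↔ b + d < a := by rw [← e, hm.lt_iff_lt]
  have l3 : Φ a ≤ Φ b + d ↔ a ≤ b + d := by rw [← e, hm.le_iff_le]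
  have l4 : Φ b + d ≤ Φ a ↔ b + d ≤ a := by rw [← e, hm.le_iff_le]
  have l5 : Φ a = Φ b + d ↔ a = b + d := by rw [← e, hm.injective.eq_iff]
  cases op <;> simp only [CCmp.evalR, ge_iff_le, gt_iff_lt]
  · rw [sub_lt_iff_lt_add', sub_lt_iff_lt_add', l1]
  · rw [sub_le_iff_le_add', sub_le_iff_le_add', l3]
  · rw [sub_eq_iff_eq_add', sub_eq_iff_eq_add', l5]
  · rw [le_sub_iff_add_le', le_sub_iff_add_le', l4]
  · rw [lt_sub_iff_add_lt', lt_sub_iff_add_lt', l2]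

theorem deform_sat {k : ℕ} {Φ : ℝ → ℝ} (hm : StrictMono Φ)
    (hp : ∀ x (n : ℤ), Φ (x + n) = Φ x + n) (v : Val k) (c : CC k) :
    c.sat (deform Φ v) ↔ c.sat v := by
  induction c with
  | diff i j op d =>
    have := deform_diff (k := k) hm hp op (v i.succ - v 0) (v j.succ - v 0) d
    simpa [CC.sat, deform] using this
  | single i op d =>
    have := deform_diff (k := k) hm hp op (v i.succ - v 0) (- v 0) d
    simpa [CC.sat, deform] using this
  | not c ih => simp [CC.sat, ih]
  | and c₁ c₂ ih₁ ih₂ => simp [CC.sat, ih₁, ih₂]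

theorem deform_shift {k : ℕ} (Φ : ℝ → ℝ) (v : Val k) (δ : ℝ) :
    deform Φ (shift v δ) = shift (deform Φ v) (Φ (- v 0) - Φ (- v 0 - δ)) := by
  funext i
  have h1 : v i + δ - (v 0 + δ) = v i - v 0 := by ring
  have h2 : -(v 0 + δ) = - v 0 - δ := by ring
  simp only [deform, shift, h1, h2]
  ring

theorem deform_reset {k : ℕ} (Φ : ℝ → ℝ) (v : Val k) (r : Finset (Fin (k+1))) (h : 0 ∉ r) :
    deform Φ (resetVal r v) = resetVal r (deform Φ v) := by
  funext i
  by_cases hi : i ∈ r <;> simp [deform, resetVal, h, hi]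

theorem deform_step {k : ℕ} {S Γ : Type} (A : PTA k S Γ) {Φ : ℝ → ℝ} (hm : StrictMono Φ)
    (hs : Function.Surjective Φ)
    (hp : ∀ x (n : ℤ), Φ (x + n) = Φ x + n) (c₁ c₂ : Config k S Γ) (h : Step A c₁ c₂) :
    Step A (c₁.1, deform Φ c₁.2.1, c₁.2.2) (c₂.1, deform Φ c₂.2.1, c₂.2.2) := by
  rcases h with ⟨e1, e2, δ, hδ, e3, hI⟩ | ⟨h1, h2, h3, h4, w, h5, h6⟩
  · refine Or.inl ⟨e1, e2, Φ (- c₁.2.1 0) - Φ (- c₁.2.1 0 - δ), ?_, ?_, ?_⟩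
    · exact sub_pos.2 (hm (by linarith))
    · show deform Φ c₂.2.1 = _
      rw [e3, deform_shift]
    · intro δ' h0 h1
      obtain ⟨y, hy⟩ := hs (Φ (- c₁.2.1 0) - δ')
      have key := deform_shift Φ c₁.2.1 (- c₁.2.1 0 - y)
      have : Φ (- c₁.2.1 0) - Φ (- c₁.2.1 0 - (- c₁.2.1 0 - y)) = δ' := by
        rw [sub_sub_cancel, hy]; ring
      rw [this] at key
      show (A.Inv c₁.1).sat (shift (deform Φ c₁.2.1) δ')
      rw [← key, deform_sat hm hp]
      apply hI
      · have : y ≤ - c₁.2.1 0 := by rw [← hm.le_iff_le, hy]; linarith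
        linarith
      · have : - c₁.2.1 0 - δ ≤ y := by rw [← hm.le_iff_le, hy]; linarith
        linarith
  · refine Or.inr ⟨(deform_sat hm hp _ _).2 h1, (deform_sat hm hp _ _).2 h2, ?_,
      (deform_sat hm hp _ _).2 h4, w, h5, h6⟩
    show deform Φ c₂.2.1 = _
    rw [h3, deform_reset _ _ _ (A.hRr _ _)]

theorem relFract_eq {k : ℕ} (v : Val k) (i : Fin (k+1)) (hi : i ≠ 0) :
    relFract v i = Int.fract (v i - v 0) := by
  simp only [relFract, if_neg hi]
  rw [Int.fract_eq_fract]
  refine ⟨- ⌊v i⌋ + 1 + ⌊v 0⌋ - ⌊1 - Int.fract (v 0)⌋, ?_⟩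
  simp only [Int.fract]
  push_cast
  ring

theorem relFract_zero {k : ℕ} (v : Val k) :
    relFract v 0 = Int.fract (- v 0) := by
  simp only [relFract, if_true]
  rw [Int.fract_eq_fract]
  refine ⟨1 + ⌊v 0⌋, ?_⟩
  simp only [Int.fract]
  push_cast
  ring

theorem deform_eq {k : ℕ} {Φ : ℝ → ℝ} (hm : StrictMono Φ)
    (hp : ∀ x (n : ℤ), Φ (x + n) = Φ x + n) (h0 : Φ 0 = 0) (v v' : Val k)
    (hv : IsVal v) (hv' : IsVal v') (hint : intPart v' = intPart v)
    (hrel : ∀ i, Φ (relFract v' i) = relFract v i) : deform Φ v' = v := by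
  have hfl : ∀ i, ⌊v' i⌋ = ⌊v i⌋ := fun i => by
    have := congrFun hint i
    simp only [intPart] at this
    have a := Int.floor_nonneg.2 (hv i)
    have b := Int.floor_nonneg.2 (hv' i)
    omega
  have hfl2 : ∀ i, ⌊deform Φ v' i⌋ = ⌊v' i⌋ := fun i => by
    have a := deform_diff (k := k) hm hp CCmp.ge (v' i - v' 0) (- v' 0) ⌊v' i⌋
    have b := deform_diff (k := k) hm hp CCmp.lt (v' i - v' 0) (- v' 0) (⌊v' i⌋ + 1)
    rw [show v' i - v' 0 - - v' 0 = v' i by ring] at a b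
    rw [Int.floor_eq_iff]
    refine ⟨a.2 (Int.floor_le _), ?_⟩
    have := b.2 (by push_cast; exact Int.lt_floor_add_one _)
    push_cast at this
    exact this
  have hΦ : ∀ x y : ℝ, Φ (Int.fract x) = Int.fract y → ∃ n : ℤ, Φ x = y + n := by
    intro x y h
    have := hp (Int.fract x) ⌊x⌋
    rw [Int.fract_add_floor, h] at this
    refine ⟨⌊x⌋ - ⌊y⌋, ?_⟩
    rw [this, Int.fract]; push_cast; ring
  obtain ⟨n, hn⟩ := hΦ (- v' 0) (- v 0) (by rw [← relFract_zero, ← relFract_zero, hrel])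
  have hfr : ∀ i, ∃ z : ℤ, deform Φ v' i = v i + z := by
    intro i
    by_cases hi : i = 0
    · subst hi
      refine ⟨-n, ?_⟩
      simp only [deform, sub_self, h0, hn]; push_cast; ring
    · obtain ⟨m, hm⟩ := hΦ (v' i - v' 0) (v i - v 0)
        (by rw [← relFract_eq _ _ hi, ← relFract_eq _ _ hi, hrel])
      refine ⟨m - n, ?_⟩
      simp only [deform, hm, hn]; push_cast; ring
  funext i
  obtain ⟨z, hz⟩ := hfr i
  have h := hfl2 i
  rw [hz, Int.floor_add_intCast, hfl] at h
  have : z = 0 := by omega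
  rw [hz, this]; simp

theorem relFract_nonneg {k : ℕ} (v : Val k) (i) : 0 ≤ relFract v i := by
  unfold relFract; split_ifs <;> exact Int.fract_nonneg _

theorem relFract_lt_one {k : ℕ} (v : Val k) (i) : relFract v i < 1 := by
  unfold relFract; split_ifs <;> exact Int.fract_lt_one _

theorem exists_pattern {k : ℕ} (v₀ v₁ : Val k) (h0 : v₀ 0 = 0) :
    ∃ η : PatSeq k, PatternOf v₀ v₁ η := by
  classical
  let f : Fin (k+1) × Bool → ℝ := fun x => relFract (bval v₀ v₁ x.2) x.1
  have hf0 : f (0, false) = 0 := by simp [f, bval, relFract_zero, h0]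
  let L : List ℝ := (Finset.univ.image f).sort (· ≤ ·)
  have hL : L.SortedLT := Finset.sortedLT_sort _
  have hmem : ∀ r, r ∈ L ↔ ∃ x, f x = r := by intro r; simp [L]
  let P : ℝ → Finset (Fin (k+1) × Bool) := fun r => Finset.univ.filter (fun x => f x = r)
  have hP : ∀ x r, x ∈ P r ↔ f x = r := by intro x r; simp [P]
  refine ⟨L.map P, ⟨?_, ?_, ?_, ?_, ?_⟩, ?_⟩
  · rw [List.length_map, Finset.length_sort]
    refine Finset.card_image_le.trans ?_
    simp; omega
  · intro p hp
    obtain ⟨r, hr, rfl⟩ := List.mem_map.1 hp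
    obtain ⟨x, hx⟩ := (hmem r).1 hr
    exact ⟨x, (hP x r).2 hx⟩
  · rw [List.pairwise_map]
    refine hL.pairwise.imp ?_
    intro a b hab
    rw [Finset.disjoint_left]
    intro x hx hy
    rw [hP] at hx hy
    linarith
  · have h0L : (0:ℝ) ∈ L := (hmem 0).2 ⟨_, hf0⟩
    have hpw := hL.pairwise
    rcases hLe : L with _ | ⟨a, t⟩
    · rw [hLe] at h0L; simp at h0L
    · have ha : 0 ≤ a := by
        obtain ⟨x, hx⟩ := (hmem a).1 (by rw [hLe]; simp)
        rw [← hx]; exact relFract_nonneg _ _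
      rw [hLe] at h0L hpw
      have : a = 0 := by
        rcases List.mem_cons.1 h0L with h | h
        · exact h.symm
        · have := (List.pairwise_cons.1 hpw).1 0 h
          linarith
      simp [hP, hf0, this]
  · intro x
    exact ⟨P (f x), List.mem_map_of_mem ((hmem _).2 ⟨x, rfl⟩), (hP _ _).2 rfl⟩
  · intro m m' b b' i i' hm hm'
    have hlen : (L.map P).length = L.length := List.length_map _
    have e1 : f (i, b) = L.get (m.cast hlen) := by
      simpa [hP] using hm
    have e2 : f (i', b') = L.get (m'.cast hlen) := by
      simpa [hP] using hm'
    have hs := hL.strictMono_get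
    change (f (i, b) = f (i', b') ↔ _) ∧ (f (i, b) < f (i', b') ↔ _)
    rw [e1, e2, hs.injective.eq_iff, hs.lt_iff_lt]
    constructor
    · simp [Fin.ext_iff]
    · exact Iff.rfl

/-- Lemma `character`. Let `A` be a PTA. For any states `s₀, s₁`, any
initialized pair `(v₀,v₁)` and any stack words `w₀, w₁`:
`(s₀,v₀,w₀) →*_A (s₁,v₁,w₁)` iff there is a pattern `η` with `(v₀,v₁) ∈ η` and
`(s₀,int(v₀),w₀) →*_{A,η} (s₁,int(v₁),w₁)`. -/
theorem character (k : ℕ) (hk : 1 ≤ k) {S Γ : Type} [Fintype S] [Fintype Γ]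
    (A : PTA k S Γ) (s₀ s₁ : S)
    (v₀ v₁ : Val k) (hv₀ : IsVal v₀) (hv₁ : IsVal v₁) (h0 : Initial v₀)
    (w₀ w₁ : List Γ) :
    Reach A (s₀, v₀, w₀) (s₁, v₁, w₁) ↔
      ∃ η : PatSeq k, PatternOf v₀ v₁ η ∧
        ReachPat A η s₀ (intPart v₀) w₀ s₁ (intPart v₁) w₁ := by
  constructor
  · intro h
    obtain ⟨η, hη⟩ := exists_pattern v₀ v₁ h0
    exact ⟨η, hη, v₀, v₁, hv₀, hv₁, h0, rfl, rfl, hη, h⟩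
  · rintro ⟨η, hη, v₀', v₁', hv₀', hv₁', h0', hi0, hi1, hη', hR⟩
    let f : Fin (k+1) × Bool → ℝ := fun x => relFract (bval v₀ v₁ x.2) x.1
    let f' : Fin (k+1) × Bool → ℝ := fun x => relFract (bval v₀' v₁' x.2) x.1
    have ho : f (0, false) = 0 := by
      have : v₀ 0 = 0 := h0
      simp [f, bval, relFract_zero, this]
    have ho' : f' (0, false) = 0 := by simp [f', bval, relFract_zero, h0']
    obtain ⟨Φ, hm, hs, hp, hΦ⟩ := interp f f' (fun _ => relFract_nonneg _ _)
      (fun _ => relFract_lt_one _ _) (fun _ => relFract_nonneg _ _)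
      (fun _ => relFract_lt_one _ _) (by
        rintro ⟨i, b⟩ ⟨i', b'⟩
        obtain ⟨p, hp, hx⟩ := hη.1.2.2.2.2 (i, b)
        obtain ⟨q, hq, hy⟩ := hη.1.2.2.2.2 (i', b')
        obtain ⟨m, rfl⟩ := List.get_of_mem hp
        obtain ⟨m', rfl⟩ := List.get_of_mem hq
        exact (hη'.2 m m' b b' i i' hx hy).2.trans (hη.2 m m' b b' i i' hx hy).2.symm)
      (0, false) ho ho'
    have hΦ0 : Φ 0 = 0 := by have := hΦ (0, false); rwa [ho, ho'] at this
    have e0 : deform Φ v₀' = v₀ :=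
      deform_eq hm hp hΦ0 v₀ v₀' hv₀ hv₀' hi0 (fun i => hΦ (i, false))
    have e1 : deform Φ v₁' = v₁ :=
      deform_eq hm hp hΦ0 v₁ v₁' hv₁ hv₁' hi1 (fun i => hΦ (i, true))
    have := Relation.TransGen.lift (p := Step A)
      (fun c : Config k S Γ => ((c.1, deform Φ c.2.1, c.2.2) : Config k S Γ))
      (fun a b h => deform_step A hm hs hp a b h) _ _ hR
    simpa only [Reach, Function.onFun, e0, e1] using this

end PTApaper
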